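/- arXiv:1604.06282 — 2 statements merged into one kernel-verified Lean document; each statement's English description precedes it below -/
import Mathlib

section
/- Let ρ ∈ [0,1], let γ₁ > 0 be a modulus of strong convexity of F, let σ, τ > 0, and let γ satisfy 0 < γ < 2γ₁/(1 + ρ + (1 + ρ + 2σγ₁)στ‖K‖²). Set ϑ = 1/√(1+σγ), σ' = ϑσ, τ' = τ/ϑ. Then there exist c ∈ (0,1) and c' > 0 such that for every saddle point (x', y'), every (x̂, ŷ) ∈ X × Y, every accelerated update (x⁺, y⁺, x̄⁺, ȳ⁺) of (x̂, ŷ) with parameters σ, τ, ϑ_p = ϑ⁻¹, ϑ_d = ϑ, and every (x, y) ∈ dom F × dom G, setting x_ρ = (1−ρ)x' + ρx, y_ρ = (1−ρ)y' + ρy, x̂⁺ = x⁺ − ϑ(x⁺ − x̄⁺), ŷ⁺ = y⁺ − ϑ⁻¹(y⁺ − ȳ⁺), one has: ρ(L(x⁺, y) − L(x, y⁺)) + (1/ϑ)[‖x̂⁺ − x_ρ + σ'K*y_ρ‖²/(2σ') + ‖ŷ⁺ − y_ρ − τ'Kx_ρ‖²/(2τ')] + (1−c)[‖x̂ − x̄⁺‖²/(2σ)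 + ‖ŷ − ȳ⁺‖²/(2τ)] + (c'/2)‖x⁺ − x_ρ‖² ≤ ‖x̂ − x_ρ + σK*y_ρ‖²/(2σ) + ‖ŷ − y_ρ − τKx_ρ‖²/(2τ). -/
/-!
With `u = x_ρ`, `v = y_ρ`, put `p = x⁺ - u`, `q = y⁺ - v`, `e = x̂ - x̄⁺`, `f = ŷ - ȳ⁺`,
`X₁ = x̃⁺ - σ K* v = σ K* (q - θ⁻¹ f)` and `Y₁ = ỹ⁺ + τ K u = -τ K (p - θ e)`.

* The subgradient inequalities at `x⁺` (towards `x` and `x'`), at `y⁺` (towards `y` and `y'`) and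
  at the saddle point, with the extra quadratic term of the strongly convex `F`
  (`strong_subgrad`), combine with weights `ρ` and `1 - ρ` to
  `ρ (L(x⁺,y) - L(x,y⁺)) ≤ σ⁻¹⟪e - X₁, p⟫ + τ⁻¹⟪f - Y₁, q⟫ - μ ‖p‖²`, where `μ = γ₁ / (1 + ρ)`
  (`gap_le`).
* Expanding the squares, all remaining terms collapse (`core_identity`), and the claim becomes
  nonnegativity of
  `c (‖e‖²/2σ + ‖f‖²/2τ) + (μ - γ/2 - c'/2) ‖p‖² + (σγ/τ)⟪Y₁, f⟫ - σγ ‖Y₁‖²/2τ`.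
* Minimizing over `f` and using `‖Y₁‖ ≤ τ ‖K‖ (‖p‖ + θ ‖e‖)` leaves a quadratic form in the two
  numbers `‖p‖`, `‖e‖`. For `c = 1`, `c' = 0` it is positive definite exactly when
  `2 γ₁ > γ (1 + ρ + (1 + ρ + 2 σ γ₁) σ τ ‖K‖²)`, which is the assumption on `γ`; by continuity it
  stays nonnegative for `c = 1 - t`, `c' = t` and small `t > 0` (`exists_t`).
-/


open scoped RealInnerProductSpace
open Filter

noncomputable section

variable {X Y : Type*} [NormedAddCommGroup X] [InnerProductSpace ℝ X] [CompleteSpace X]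
  [NormedAddCommGroup Y] [InnerProductSpace ℝ Y] [CompleteSpace Y]

/-- The convex subdifferential of an extended-real-valued functional. -/
def ediff (F : X → EReal) (x : X) : Set X :=
  {ξ : X | ∀ z : X, F x + ((⟪ξ, z - x⟫ : ℝ) : EReal) ≤ F z}

/-- The effective domain. -/
def edom (F : X → EReal) : Set X := {x : X | F x ≠ ⊤}

/-- Properness: nowhere `⊥` and somewhere finite. -/
def Proper (F : X → EReal) : Prop := (∀ x, F x ≠ ⊥) ∧ ∃ x, F x ≠ ⊤

/-- `F` admits `γ` as a modulus of strong convexity. -/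
def StrongModulus (F : X → EReal) (γ : ℝ) : Prop :=
  ∀ x z : X, ∀ l : ℝ, 0 ≤ l → l ≤ 1 →
    F (l • x + (1 - l) • z) + ((γ * l * (1 - l) * ‖x - z‖ ^ 2 / 2 : ℝ) : EReal) ≤
      (l : EReal) * F x + ((1 - l : ℝ) : EReal) * F z

/-- Saddle points of the Lagrangian `L(x,y) = ⟪Kx, y⟫ + F(x) - G(y)`. -/
def IsSaddle (K : X →L[ℝ] Y) (F : X → EReal) (G : Y → EReal) (xs : X) (ys : Y) : Prop :=
  xs ∈ edom F ∧ ys ∈ edom G ∧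
    (-(ContinuousLinearMap.adjoint K) ys) ∈ ediff F xs ∧ K xs ∈ ediff G ys

/-- The Lagrangian, as a real number (meaningful on `edom F × edom G`). -/
def lagr (K : X →L[ℝ] Y) (F : X → EReal) (G : Y → EReal) (x : X) (y : Y) : ℝ :=
  ⟪K x, y⟫ + (F x).toReal - (G y).toReal

/-- One accelerated update step with parameters `σ, τ, tp, td` from `(xh, yh)` to
`(xp, yp, xbp, ybp)`. -/
def IsAccUpdate (K : X →L[ℝ] Y) (F : X → EReal) (G : Y → EReal) (σ τ tp td : ℝ)
    (xh : X) (yh : Y) (xp : X) (yp : Y) (xbp : X) (ybp : Y) : Prop :=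
  σ⁻¹ • (xh - xp) ∈ ediff F xp ∧
  τ⁻¹ • (yh - yp) ∈ ediff G yp ∧
  xp - xbp = σ • (ContinuousLinearMap.adjoint K) (yp + tp • (ybp - yh)) ∧
  yp - ybp = -(τ • K (xp + td • (xbp - xh)))

/-! ### Subgradient inequalities -/

/-- If a subgradient exists at `x`, then `F x` is finite for proper `F`. -/
lemma mem_edom_of_ediff {H : Type*} [NormedAddCommGroup H] [InnerProductSpace ℝ H]
    {F : H → EReal} (hFp : Proper F) {x ξ : H} (h : ξ ∈ ediff F x) : x ∈ edom F := by
  obtain ⟨hb, z, hz⟩ := hFp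
  intro hx
  have h1 := h z
  rw [hx, EReal.top_add_coe] at h1
  exact hz (top_le_iff.mp h1)

lemma subgrad_real {H : Type*} [NormedAddCommGroup H] [InnerProductSpace ℝ H]
    {F : H → EReal} (hFp : Proper F) {x ξ z : H} (h : ξ ∈ ediff F x) (hz : z ∈ edom F) :
    (F x).toReal + ⟪ξ, z - x⟫ ≤ (F z).toReal := by
  have hx := mem_edom_of_ediff hFp h
  have h1 := h z
  rw [← EReal.coe_toReal hx (hFp.1 x), ← EReal.coe_toReal hz (hFp.1 z)] at h1
  exact_mod_cast h1

/-- Strong convexity improves the subgradient inequality by a quadratic term. -/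
lemma strong_subgrad {H : Type*} [NormedAddCommGroup H] [InnerProductSpace ℝ H]
    {F : H → EReal} (hFp : Proper F) {g : ℝ} (hF : StrongModulus F g)
    {x ξ z : H} (h : ξ ∈ ediff F x) (hz : z ∈ edom F) :
    (F x).toReal + ⟪ξ, z - x⟫ + g / 2 * ‖z - x‖ ^ 2 ≤ (F z).toReal := by
  have hx := mem_edom_of_ediff hFp h
  -- compare with the point `l • z + (1 - l) • x`, divide by `l`, and let `l` tend to `0`
  have key : ∀ l : ℝ, 0 < l → l < 1 →
      (F x).toReal + ⟪ξ, z - x⟫ + (1 - l) * (g / 2 * ‖z - x‖ ^ 2) ≤ (F z).toReal := by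
    intro l hl0 hl1
    have h2 := hF z x l hl0.le hl1.le
    have h1 := h (l • z + (1 - l) • x)
    have e : l • z + (1 - l) • x - x = l • (z - x) := by module
    rw [e, real_inner_smul_right] at h1
    have h3 := (add_le_add_left h1 ((g * l * (1 - l) * ‖z - x‖ ^ 2 / 2 : ℝ) : EReal)).trans h2
    rw [← EReal.coe_toReal hx (hFp.1 x), ← EReal.coe_toReal hz (hFp.1 z)] at h3
    have h4 : (F x).toReal + l * ⟪ξ, z - x⟫ + g * l * (1 - l) * ‖z - x‖ ^ 2 / 2 ≤
        l * (F z).toReal + (1 - l) * (F x).toReal := by exact_mod_cast h3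
    refine le_of_mul_le_mul_left ?_ hl0
    linarith
  have ht : Tendsto (fun l : ℝ => (F x).toReal + ⟪ξ, z - x⟫ + (1 - l) * (g / 2 * ‖z - x‖ ^ 2))
      (nhdsWithin 0 (Set.Ioi 0))
      (nhds ((F x).toReal + ⟪ξ, z - x⟫ + (1 - 0) * (g / 2 * ‖z - x‖ ^ 2))) := by
    apply Tendsto.mono_left _ nhdsWithin_le_nhds
    apply Continuous.tendsto (by fun_prop)
  rw [sub_zero, one_mul] at ht
  refine le_of_tendsto ht ?_
  filter_upwards [Ioo_mem_nhdsGT (zero_lt_one' ℝ)] with l hl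
  exact key l hl.1 hl.2

/-! ### Lagrangian gap estimate -/

/-- The constant `γ₁ / (1 + ρ)` is the largest `μ` for which
`μ ‖(1-ρ) s + ρ t‖² ≤ (1-ρ) γ₁ ‖s‖² + ρ (γ₁/2) ‖t‖²`. -/
lemma weighted_sq {H : Type*} [NormedAddCommGroup H] [InnerProductSpace ℝ H]
    {ρ g : ℝ} (hρ0 : 0 ≤ ρ) (hρ1 : ρ ≤ 1) (hg : 0 < g) (s t : H) :
    g / (1 + ρ) * ‖(1 - ρ) • s + ρ • t‖ ^ 2 ≤
      (1 - ρ) * (g * ‖s‖ ^ 2) + ρ * (g / 2 * ‖t‖ ^ 2) := by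
  rw [norm_add_sq_real, norm_smul, norm_smul, inner_smul_left, inner_smul_right]
  have h0 : 0 ≤ ‖t - (2 : ℝ) • s‖ ^ 2 := by positivity
  rw [norm_sub_sq_real, inner_smul_right, norm_smul] at h0
  rw [div_mul_eq_mul_div, div_le_iff₀ (by positivity), mul_pow, mul_pow]
  simp only [Real.norm_eq_abs, sq_abs, conj_trivial] at *
  rw [real_inner_comm] at h0
  rw [mul_pow, sq_abs] at h0
  nlinarith [mul_nonneg (mul_nonneg (mul_nonneg hρ0 (sub_nonneg.2 hρ1)) hg.le) h0]

lemma gap_le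
    {F : X → EReal} {G : Y → EReal} {K : X →L[ℝ] Y} (hFp : Proper F) (hGp : Proper G)
    {γ₁ : ℝ} (hγ₁ : 0 < γ₁) (hF : StrongModulus F γ₁)
    {ρ : ℝ} (hρ0 : 0 ≤ ρ) (hρ1 : ρ ≤ 1)
    {x' : X} {y' : Y} (hs : IsSaddle K F G x' y')
    {ξ xp : X} {η yp : Y} (hξ : ξ ∈ ediff F xp) (hη : η ∈ ediff G yp)
    {x : X} (hx : x ∈ edom F) {y : Y} (hy : y ∈ edom G) :
    ρ * (lagr K F G xp y - lagr K F G x yp) ≤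
      ⟪ξ + ContinuousLinearMap.adjoint K ((1 - ρ) • y' + ρ • y),
        xp - ((1 - ρ) • x' + ρ • x)⟫
      + ⟪η - K ((1 - ρ) • x' + ρ • x), yp - ((1 - ρ) • y' + ρ • y)⟫
      - γ₁ / (1 + ρ) * ‖xp - ((1 - ρ) • x' + ρ • x)‖ ^ 2 := by
  obtain ⟨hx', hy', hsx, hsy⟩ := hs
  have f1 := strong_subgrad hFp hF hξ hx
  have f2 := strong_subgrad hFp hF hξ hx'
  have f3 := strong_subgrad hFp hF hsx (mem_edom_of_ediff hFp hξ)
  have g1 := subgrad_real hGp hη hy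
  have g2 := subgrad_real hGp hη hy'
  have g3 := subgrad_real hGp hsy (mem_edom_of_ediff hGp hη)
  have w := weighted_sq hρ0 hρ1 hγ₁ (xp - x') (xp - x)
  have e : (1 - ρ) • (xp - x') + ρ • (xp - x) = xp - ((1 - ρ) • x' + ρ • x) := by module
  rw [e] at w
  rw [norm_sub_rev x xp] at f1
  rw [norm_sub_rev x' xp] at f2
  have A := mul_le_mul_of_nonneg_left (add_le_add f1 g1) hρ0
  have B := mul_le_mul_of_nonneg_left (add_le_add (add_le_add f2 f3) (add_le_add g2 g3))
    (sub_nonneg.2 hρ1)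
  have lin : ⟪ξ + ContinuousLinearMap.adjoint K ((1 - ρ) • y' + ρ • y),
        xp - ((1 - ρ) • x' + ρ • x)⟫
      + ⟪η - K ((1 - ρ) • x' + ρ • x), yp - ((1 - ρ) • y' + ρ • y)⟫
      = - ρ * (⟪ξ, x - xp⟫ + ⟪η, y - yp⟫)
        - (1 - ρ) * (⟪ξ, x' - xp⟫ + ⟪-(ContinuousLinearMap.adjoint K) y', xp - x'⟫
          + (⟪η, y' - yp⟫ + ⟪K x', yp - y'⟫))
        + ρ * (⟪K xp, y⟫ - ⟪K x, yp⟫) := by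
    simp only [map_add, map_smul, inner_add_left, inner_add_right, inner_sub_left,
      inner_sub_right, inner_neg_left, inner_smul_left, inner_smul_right,
      ContinuousLinearMap.adjoint_inner_left, conj_trivial]
    simp only [real_inner_comm]
    ring
  rw [lin]
  unfold lagr
  linarith

/-! ### Expansion of the squares -/

/-- The collapse of all quadratic terms; `r` stands for `θ⁻¹`, so that `σ γ = r² - 1`. -/
lemma core_identity (K : X →L[ℝ] Y) {σ τ γ r : ℝ} (hσ : 0 < σ) (hτ : 0 < τ) (hr : 0 < r)
    (hrγ : r ^ 2 = 1 + σ * γ) (p e X₁ : X) (q f Y₁ : Y)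
    (hX : X₁ = σ • ContinuousLinearMap.adjoint K (q - r • f))
    (hY : Y₁ = -(τ • K (p - r⁻¹ • e))) :
    ‖p + e - X₁‖ ^ 2 / (2 * σ) + ‖q + f - Y₁‖ ^ 2 / (2 * τ)
      - (⟪σ⁻¹ • (e - X₁), p⟫ + ⟪τ⁻¹ • (f - Y₁), q⟫)
      - r * (‖p - r⁻¹ • X₁‖ ^ 2 / (2 * (r⁻¹ * σ)) + ‖q - r • Y₁‖ ^ 2 / (2 * (τ / r⁻¹)))
    = ‖e‖ ^ 2 / (2 * σ) + ‖f‖ ^ 2 / (2 * τ) - γ / 2 * ‖p‖ ^ 2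
      + σ * γ / τ * ⟪Y₁, f⟫ - σ * γ * ‖Y₁‖ ^ 2 / (2 * τ) := by
  have hγ : γ = (r ^ 2 - 1) / σ := by field_simp; linarith
  have a1 : ⟪p, X₁⟫ = σ * (⟪K p, q⟫ - r * ⟪K p, f⟫) := by
    rw [hX, inner_smul_right, ContinuousLinearMap.adjoint_inner_right, inner_sub_right,
      inner_smul_right]
  have a2 : ⟪e, X₁⟫ = σ * (⟪K e, q⟫ - r * ⟪K e, f⟫) := by
    rw [hX, inner_smul_right, ContinuousLinearMap.adjoint_inner_right, inner_sub_right,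
      inner_smul_right]
  have a3 : ∀ w : Y, ⟪Y₁, w⟫ = - (τ * (⟪K p, w⟫ - r⁻¹ * ⟪K e, w⟫)) := by
    intro w
    rw [hY, inner_neg_left, real_inner_smul_left, map_sub, map_smul, inner_sub_left,
      real_inner_smul_left]
  clear hX hY
  rw [real_inner_smul_left, real_inner_smul_left, inner_sub_left, inner_sub_left,
    norm_sub_sq_real, norm_sub_sq_real, norm_sub_sq_real, norm_sub_sq_real, norm_add_sq_real,
    norm_add_sq_real, inner_add_left, inner_add_left, inner_smul_right, inner_smul_right,
    real_inner_comm X₁, real_inner_comm p e, real_inner_comm Y₁ q, real_inner_comm Y₁ f,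
    real_inner_comm q f, norm_smul, norm_smul, mul_pow, mul_pow]
  simp only [Real.norm_eq_abs, sq_abs]
  simp only [real_inner_comm p X₁, a1, a2, a3]
  subst hγ
  field_simp
  ring

/-! ### Positivity of the remaining quadratic form -/

/-- A small perturbation parameter `t` (for `c = 1 - t` and `c' = t`) keeps the discriminant
condition of the final quadratic form. -/
lemma exists_t {γ₁ ρ σ τ γ k : ℝ} (hγ₁ : 0 < γ₁) (hρ0 : 0 ≤ ρ) (hσ : 0 < σ) (hτ : 0 < τ)
    (hγ0 : 0 < γ)
    (hγ : γ < 2 * γ₁ / (1 + ρ + (1 + ρ + 2 * σ * γ₁) * σ * τ * k ^ 2)) :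
    ∃ t : ℝ, 0 < t ∧ t < 1 ∧ 0 < (1 - t) ^ 2 - σ * γ * (σ * τ * k ^ 2) ∧
      γ * (1 + σ * γ) * (σ * τ * k ^ 2) * (1 - t) ≤
        (2 * (γ₁ / (1 + ρ)) - γ - t) * ((1 - t) ^ 2 - σ * γ * (σ * τ * k ^ 2)) := by
  have hw : 0 ≤ σ * τ * k ^ 2 := by positivity
  have hγ' : γ * (1 + ρ + (1 + ρ + 2 * σ * γ₁) * (σ * τ * k ^ 2)) < 2 * γ₁ := by
    rw [lt_div_iff₀ (by positivity)] at hγ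
    linarith
  generalize σ * τ * k ^ 2 = w at *
  have h1 : 0 < 1 - σ * γ * w := by
    have h : 0 ≤ γ * ((1 + ρ) * (1 + w)) := by positivity
    have : γ₁ * 0 < γ₁ * (1 - σ * γ * w) := by nlinarith
    exact lt_of_mul_lt_mul_left this hγ₁.le
  have h2 : γ * (1 + σ * γ) * w < (2 * (γ₁ / (1 + ρ)) - γ) * (1 - σ * γ * w) := by
    have : 0 < (2 * γ₁ - γ * (1 + ρ + (1 + ρ + 2 * σ * γ₁) * w)) / (1 + ρ) :=
      div_pos (by linarith) (by positivity)
    have e : (2 * γ₁ - γ * (1 + ρ + (1 + ρ + 2 * σ * γ₁) * w)) / (1 + ρ) =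
        (2 * (γ₁ / (1 + ρ)) - γ) * (1 - σ * γ * w) - γ * (1 + σ * γ) * w := by
      field_simp
      ring
    linarith
  have c1 : Tendsto (fun t : ℝ => (1 - t) ^ 2 - σ * γ * w) (nhdsWithin 0 (Set.Ioi 0))
      (nhds ((1 - 0) ^ 2 - σ * γ * w)) :=
    (Continuous.tendsto (by fun_prop) 0).mono_left nhdsWithin_le_nhds
  have c2 : Tendsto (fun t : ℝ => (2 * (γ₁ / (1 + ρ)) - γ - t) * ((1 - t) ^ 2 - σ * γ * w)
        - γ * (1 + σ * γ) * w * (1 - t)) (nhdsWithin 0 (Set.Ioi 0))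
      (nhds ((2 * (γ₁ / (1 + ρ)) - γ - 0) * ((1 - 0) ^ 2 - σ * γ * w)
        - γ * (1 + σ * γ) * w * (1 - 0))) :=
    (Continuous.tendsto (by fun_prop) 0).mono_left nhdsWithin_le_nhds
  have m1 := c1.eventually (lt_mem_nhds (show (0 : ℝ) < _ by linarith))
  have m2 := c2.eventually (lt_mem_nhds (show (0 : ℝ) < _ by linarith))
  obtain ⟨t, ⟨ht1, ht2⟩, ht⟩ := ((m1.and m2).and (Ioo_mem_nhdsGT (zero_lt_one' ℝ))).exists
  exact ⟨t, ht.1, ht.2, ht1, by linarith⟩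

/-- Nonnegativity of `αE² + βP² - n(P+E)²` from its discriminant. -/
lemma quad_nonneg {α β n P E : ℝ} (hα : 0 < α - n) (h : n * α ≤ β * (α - n)) :
    n * (P + E) ^ 2 ≤ α * E ^ 2 + β * P ^ 2 := by
  have : (α - n) * 0 ≤ (α - n) * (α * E ^ 2 + β * P ^ 2 - n * (P + E) ^ 2) := by
    have e : (α - n) * (α * E ^ 2 + β * P ^ 2 - n * (P + E) ^ 2) =
        ((α - n) * E - n * P) ^ 2 + (β * (α - n) - n * α) * P ^ 2 := by ring
    rw [e, mul_zero]
    have := sub_nonneg.2 h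
    positivity
  linarith [le_of_mul_le_mul_left this hα]

/-- Nonnegativity of the form left over by `core_identity`, with `c = 1 - t`, `c' = t`. -/
lemma form_nonneg (K : X →L[ℝ] Y) {σ τ γ r t m : ℝ} (hσ : 0 < σ) (hτ : 0 < τ) (hγ0 : 0 < γ)
    (hr : 0 < r) (hrγ : r ^ 2 = 1 + σ * γ) (ht0 : 0 < t) (ht1 : t < 1)
    (h1 : 0 < (1 - t) ^ 2 - σ * γ * (σ * τ * ‖K‖ ^ 2))
    (h2 : γ * (1 + σ * γ) * (σ * τ * ‖K‖ ^ 2) * (1 - t) ≤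
        (2 * m - γ - t) * ((1 - t) ^ 2 - σ * γ * (σ * τ * ‖K‖ ^ 2)))
    (p e : X) (f Y₁ : Y) (hY : Y₁ = -(τ • K (p - r⁻¹ • e))) :
    0 ≤ (1 - t) * (‖e‖ ^ 2 / (2 * σ) + ‖f‖ ^ 2 / (2 * τ)) + (m - γ / 2 - t / 2) * ‖p‖ ^ 2
      + σ * γ / τ * ⟪Y₁, f⟫ - σ * γ * ‖Y₁‖ ^ 2 / (2 * τ) := by
  have hc0 : 0 < 1 - t := by linarith
  have hc1 : 1 - t < 1 := by linarith
  generalize 1 - t = c at *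
  set P := ‖p‖ with hP
  set E := r⁻¹ * ‖e‖ with hE
  have hP0 : 0 ≤ P := norm_nonneg _
  have hE0 : 0 ≤ E := by positivity
  have heE : ‖e‖ ^ 2 = (1 + σ * γ) * E ^ 2 := by rw [hE, ← hrγ]; field_simp
  have hYn : ‖Y₁‖ ≤ τ * (‖K‖ * (P + E)) := by
    rw [hY, norm_neg, norm_smul, Real.norm_of_nonneg hτ.le]
    gcongr
    refine (K.le_opNorm _).trans ?_
    gcongr
    refine (norm_sub_le _ _).trans ?_
    rw [norm_smul, Real.norm_of_nonneg (by positivity)]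
  have hY2 : ‖Y₁‖ ^ 2 ≤ (τ * (‖K‖ * (P + E))) ^ 2 := by gcongr
  have hin : -(‖Y₁‖ * ‖f‖) ≤ ⟪Y₁, f⟫ := by
    have := abs_real_inner_le_norm Y₁ f
    exact (abs_le.1 this).1
  -- the quadratic form in `‖p‖` and `r⁻¹‖e‖`
  have hq := quad_nonneg (α := c ^ 2 * (1 + σ * γ) / σ) (β := c * (2 * m - γ - t))
    (n := γ * (1 + σ * γ) * (σ * τ * ‖K‖ ^ 2)) (P := P) (E := E)
    (by
      have e1 : c ^ 2 * (1 + σ * γ) / σ - γ * (1 + σ * γ) * (σ * τ * ‖K‖ ^ 2) =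
        (1 + σ * γ) / σ * (c ^ 2 - σ * γ * (σ * τ * ‖K‖ ^ 2)) := by field_simp
      rw [e1]; positivity)
    (by
      have h3 := mul_le_mul_of_nonneg_left h2
        (show 0 ≤ c * ((1 + σ * γ) / σ) by positivity)
      have e1 : c * (2 * m - γ - t) *
          (c ^ 2 * (1 + σ * γ) / σ - γ * (1 + σ * γ) * (σ * τ * ‖K‖ ^ 2)) =
          c * ((1 + σ * γ) / σ) * ((2 * m - γ - t) *
            (c ^ 2 - σ * γ * (σ * τ * ‖K‖ ^ 2))) := by field_simp
      rw [e1]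
      refine le_trans (le_of_eq ?_) h3
      ring)
  -- completing the square in `f`, and `c + σ γ ≤ 1 + σ γ`
  have hf : -(σ * γ * (1 + σ * γ) * ‖Y₁‖ ^ 2) ≤
      c ^ 2 * ‖f‖ ^ 2 + 2 * c * (σ * γ) * ⟪Y₁, f⟫ - c * (σ * γ * ‖Y₁‖ ^ 2) := by
    have hsγ : 0 < σ * γ := by positivity
    have i1 := mul_le_mul_of_nonneg_left hin (show 0 ≤ 2 * c * (σ * γ) by positivity)
    have i2 : 0 ≤ (1 - c) * (σ * γ * ‖Y₁‖ ^ 2) :=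
      mul_nonneg (by linarith) (by positivity)
    nlinarith [sq_nonneg (c * ‖f‖ - σ * γ * ‖Y₁‖)]
  have hn : σ * γ * (1 + σ * γ) * ‖Y₁‖ ^ 2 / τ ≤
      γ * (1 + σ * γ) * (σ * τ * ‖K‖ ^ 2) * (P + E) ^ 2 := by
    rw [div_le_iff₀ hτ]
    have := mul_le_mul_of_nonneg_left hY2 (show 0 ≤ σ * γ * (1 + σ * γ) by positivity)
    linarith
  have hf' := div_le_div_of_nonneg_right hf hτ.le
  have goal2 : 0 ≤ 2 * c * (c * (‖e‖ ^ 2 / (2 * σ) + ‖f‖ ^ 2 / (2 * τ))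
      + (m - γ / 2 - t / 2) * P ^ 2
      + σ * γ / τ * ⟪Y₁, f⟫ - σ * γ * ‖Y₁‖ ^ 2 / (2 * τ)) := by
    rw [heE]
    have e1 : 2 * c * (c * ((1 + σ * γ) * E ^ 2 / (2 * σ) + ‖f‖ ^ 2 / (2 * τ))
      + (m - γ / 2 - t / 2) * P ^ 2
      + σ * γ / τ * ⟪Y₁, f⟫ - σ * γ * ‖Y₁‖ ^ 2 / (2 * τ)) =
      c ^ 2 * (1 + σ * γ) / σ * E ^ 2 + c * (2 * m - γ - t) * P ^ 2 +
      (c ^ 2 * ‖f‖ ^ 2 + 2 * c * (σ * γ) * ⟪Y₁, f⟫ - c * (σ * γ * ‖Y₁‖ ^ 2)) / τ := by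
      field_simp
      ring
    rw [e1]
    rw [neg_div] at hf'
    linarith
  exact nonneg_of_mul_nonneg_right goal2 (by positivity)

/-! ### The descent estimate -/

/-- Proposition: descent estimate of the accelerated Douglas--Rachford
step in case `F` is strongly convex. -/
theorem statement13
    (F : X → EReal) (G : Y → EReal) (K : X →L[ℝ] Y)
    (hFp : Proper F) (hFl : LowerSemicontinuous F)
    (hGp : Proper G) (hGl : LowerSemicontinuous G)
    (γ₁ : ℝ) (hγ₁ : 0 < γ₁) (hF : StrongModulus F γ₁)
    (ρ : ℝ) (hρ0 : 0 ≤ ρ) (hρ1 : ρ ≤ 1)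
    (σ τ : ℝ) (hσ : 0 < σ) (hτ : 0 < τ)
    (γ : ℝ) (hγ0 : 0 < γ)
    (hγ : γ < 2 * γ₁ / (1 + ρ + (1 + ρ + 2 * σ * γ₁) * σ * τ * ‖K‖ ^ 2))
    (θ σ' τ' : ℝ)
    (hθ : θ = 1 / Real.sqrt (1 + σ * γ)) (hσ' : σ' = θ * σ) (hτ' : τ' = τ / θ) :
    ∃ c : ℝ, ∃ c' : ℝ, 0 < c ∧ c < 1 ∧ 0 < c' ∧
      ∀ x' : X, ∀ y' : Y, IsSaddle K F G x' y' →
      ∀ xh : X, ∀ yh : Y, ∀ xp : X, ∀ yp : Y, ∀ xbp : X, ∀ ybp : Y,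
        IsAccUpdate K F G σ τ θ⁻¹ θ xh yh xp yp xbp ybp →
      ∀ x ∈ edom F, ∀ y ∈ edom G,
        ρ * (lagr K F G xp y - lagr K F G x yp)
          + θ⁻¹ * (‖(xp - θ • (xp - xbp)) - ((1 - ρ) • x' + ρ • x)
                + σ' • (ContinuousLinearMap.adjoint K) ((1 - ρ) • y' + ρ • y)‖ ^ 2 / (2 * σ')
              + ‖(yp - θ⁻¹ • (yp - ybp)) - ((1 - ρ) • y' + ρ • y)
                - τ' • K ((1 - ρ) • x' + ρ • x)‖ ^ 2 / (2 * τ'))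
          + (1 - c) * (‖xh - xbp‖ ^ 2 / (2 * σ) + ‖yh - ybp‖ ^ 2 / (2 * τ))
          + (c' / 2) * ‖xp - ((1 - ρ) • x' + ρ • x)‖ ^ 2
        ≤ ‖xh - ((1 - ρ) • x' + ρ • x)
              + σ • (ContinuousLinearMap.adjoint K) ((1 - ρ) • y' + ρ • y)‖ ^ 2 / (2 * σ)
          + ‖yh - ((1 - ρ) • y' + ρ • y) - τ • K ((1 - ρ) • x' + ρ • x)‖ ^ 2 / (2 * τ) := by
  obtain ⟨t, ht0, ht1, h1, h2⟩ := exists_t hγ₁ hρ0 hσ hτ hγ0 hγ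
  refine ⟨1 - t, t, by linarith, by linarith, ht0, ?_⟩
  intro x' y' hs xh yh xp yp xbp ybp ⟨hξ, hη, hxu, hyu⟩ x hx y hy
  have hgap := gap_le hFp hGp hγ₁ hF hρ0 hρ1 hs hξ hη hx hy
  obtain ⟨r, hrdef⟩ : ∃ r, r = Real.sqrt (1 + σ * γ) := ⟨_, rfl⟩
  have hr : 0 < r := by rw [hrdef]; positivity
  have hrγ : r ^ 2 = 1 + σ * γ := by rw [hrdef]; exact Real.sq_sqrt (by positivity)
  have hθr : θ = r⁻¹ := by rw [hθ, hrdef, one_div]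
  subst hθr hσ' hτ'
  rw [inv_inv] at *
  clear hs hξ hη hx hy hrdef hθ
  generalize (1 - ρ) • x' + ρ • x = u at *
  generalize (1 - ρ) • y' + ρ • y = v at *
  set A := ContinuousLinearMap.adjoint K with hA
  have hX : xp - xbp - σ • A v = σ • A ((yp - v) - r • (yh - ybp)) := by
    rw [hxu]; simp only [map_add, map_sub, map_smul]; module
  have hY : yp - ybp + τ • K u = -(τ • K ((xp - u) - r⁻¹ • (xh - xbp))) := by
    rw [hyu]; simp only [map_add, map_sub, map_smul]; module
  have hid := core_identity K hσ hτ hr hrγ (xp - u) (xh - xbp) _ (yp - v) (yh - ybp) _ hX hY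
  have hform := form_nonneg K hσ hτ hγ0 hr hrγ ht0 ht1 h1 h2 (xp - u) (xh - xbp) (yh - ybp) _ hY
  have e1 : xp - u + (xh - xbp) - (xp - xbp - σ • A v) = xh - u + σ • A v := by module
  have e2 : yp - v + (yh - ybp) - (yp - ybp + τ • K u) = yh - v - τ • K u := by module
  have e3 : σ⁻¹ • (xh - xbp - (xp - xbp - σ • A v)) = σ⁻¹ • (xh - xp) + A v := by
    have : σ⁻¹ • σ • A v = A v := inv_smul_smul₀ hσ.ne' _
    rw [← sub_add, smul_add, this]; module
  have e4 : τ⁻¹ • (yh - ybp - (yp - ybp + τ • K u)) = τ⁻¹ • (yh - yp) - K u := by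
    have : τ⁻¹ • τ • K u = K u := inv_smul_smul₀ hτ.ne' _
    rw [← sub_sub, smul_sub _ _ (τ • K u), this]; module
  have e5 : xp - u - r⁻¹ • (xp - xbp - σ • A v) =
      xp - r⁻¹ • (xp - xbp) - u + (r⁻¹ * σ) • A v := by module
  have e6 : yp - v - r • (yp - ybp + τ • K u) =
      yp - r • (yp - ybp) - v - (τ / r⁻¹) • K u := by
    rw [div_inv_eq_mul]; module
  rw [e1, e2, e3, e4, e5, e6] at hid
  linarith


end
end

section
/- Assume F admits modulus of strong convexity γ₁ > 0, let X₀ × Y₀ ⊆ dom F × dom G be bounded and contain a saddle point (x*, y*), and let (xᵏ, yᵏ) be generated by the accelerated Douglas–Rachford iteration (with initial step sizes σ₀, τ₀ > 0 and acceleration factor 0 < γ < 2γ₁/(1 + σ₀τ₀‖K‖²)). Then 𝔊_{X₀×Y₀}(xᵏ, yᵏ) → 0 as k → ∞, and the restricted primal error satisfies 𝔈^p_{Y₀}(xᵏ) = o(1/k), i.e. k·𝔈^p_{Y₀}(xᵏ) → 0. -/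
/-!
Fix a saddle point and write `e`, `f` for the errors of the new iterate, `a = x̂ - x̄`,
`b = ŷ - ȳ` for the increments of one step, `μ = θ⁻¹`. The optimality system holds at the new
iterate up to the residuals `A = a / σ + μ K* b` and `B = b / τ - θ K a`, so the Lagrangian gap
against `(x', y')` is at most `⟪A, x - x'⟫ + ⟪B, y - y'⟫` (`gap_le_residual`). Everything thus
reduces to the sizes of `a`, `b`, `e` and `f`.

These come from the energy `V = ‖ξ‖² / σ² + ‖η‖² / (σ τ)`, where `ξ = x̂ - (x* - σ K* y*)` and
`η = ŷ - (y* + τ K x*)`. Strong convexity, used once in the subgradient inequality at the iterate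
and once at the saddle point, gives with `h = e - θ a` the inequality (`energy_descent`)
`V₊ + ‖a‖² / σ² + ‖b‖² / (σ τ) + ((2 γ₁ - γ) ‖e‖² - γ σ τ ‖K h‖²) / σ - 2 γ ⟪b, K h⟫ ≤ V`.
As `σ τ` is constant and `σ → 0`, the condition on `γ` makes the indefinite terms absorbable for
large `k` (`absorb`). Hence `V` is eventually decreasing, so `‖a‖ / σ → 0` and `‖b‖ → 0`, and its
boundedness yields `e = O(σ)` and `f = O(1)` (`recover`, `asymptotics`).

Now `A → 0` and `B = o(σ)`, which gives the convergence of the gap on bounded sets. For the primal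
error one compares with `x' = x*` only; there `x - x* = O(σ)`, so the bound is `o(σ)`, and
`σ = O(1 / k)` (`step_sizes`).
-/

open scoped RealInnerProductSpace
open Filter

noncomputable section

variable {X Y : Type*} [NormedAddCommGroup X] [InnerProductSpace ℝ X] [CompleteSpace X]
  [NormedAddCommGroup Y] [InnerProductSpace ℝ Y] [CompleteSpace Y]

/-- The restricted primal-dual gap `𝔊_{X₀ × Y₀}`. -/
def gap (K : X →L[ℝ] Y) (F : X → EReal) (G : Y → EReal)
    (X₀ : Set X) (Y₀ : Set Y) (x : X) (y : Y) : EReal :=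
  ⨆ x' ∈ X₀, ⨆ y' ∈ Y₀,
    (((⟪K x, y'⟫ - ⟪K x', y⟫ - (G y').toReal - (F x').toReal : ℝ) : EReal) + F x + G y)

/-- The restricted primal error functional `𝔈^p_{Y₀}` (relative to the saddle point `xs`). -/
def epRestr (K : X →L[ℝ] Y) (F : X → EReal) (G : Y → EReal)
    (Y₀ : Set Y) (xs : X) (x : X) : EReal :=
  (F x + ⨆ y' ∈ Y₀, ((⟪K x, y'⟫ - (G y').toReal : ℝ) : EReal))
    - (F xs + ⨆ y' ∈ Y₀, ((⟪K xs, y'⟫ - (G y').toReal : ℝ) : EReal))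

/-- The accelerated Douglas--Rachford iteration with acceleration factor `γ`. -/
def IsADR (K : X →L[ℝ] Y) (F : X → EReal) (G : Y → EReal) (γ : ℝ)
    (σ τ θ : ℕ → ℝ) (xh : ℕ → X) (yh : ℕ → Y) (u : ℕ → X) (v : ℕ → Y)
    (ub : ℕ → X) (vb : ℕ → Y) : Prop :=
  (∀ k : ℕ, θ k = 1 / Real.sqrt (1 + σ k * γ)) ∧
  (∀ k : ℕ, σ (k+1) = θ k * σ k) ∧ (∀ k : ℕ, τ (k+1) = τ k / θ k) ∧
  ∀ k : ℕ,
    (σ k)⁻¹ • (xh k - u (k+1)) ∈ ediff F (u (k+1)) ∧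
    (τ k)⁻¹ • (yh k - v (k+1)) ∈ ediff G (v (k+1)) ∧
    u (k+1) - ub (k+1)
      = σ k • (ContinuousLinearMap.adjoint K) (v (k+1) + (θ k)⁻¹ • (vb (k+1) - yh k)) ∧
    v (k+1) - vb (k+1) = -(τ k • K (u (k+1) + θ k • (ub (k+1) - xh k))) ∧
    xh (k+1) = u (k+1) - θ k • (u (k+1) - ub (k+1)) ∧
    yh (k+1) = v (k+1) - (θ k)⁻¹ • (v (k+1) - vb (k+1))

set_option linter.unusedSectionVars false

/-! ### Subgradient inequalities between real numbers -/

lemma ediff_real {F : X → EReal} (hFp : Proper F) {x ξ : X} (hξ : ξ ∈ ediff F x) :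
    x ∈ edom F ∧ ∀ z ∈ edom F, (F x).toReal + ⟪ξ, z - x⟫ ≤ (F z).toReal := by
  have hx : F x ≠ ⊤ := by
    obtain ⟨z, hz⟩ := hFp.2
    intro h
    have h1 := hξ z
    rw [h, EReal.top_add_coe] at h1
    exact hz (top_le_iff.1 h1)
  refine ⟨hx, fun z hz => ?_⟩
  have h1 := hξ z
  rw [← EReal.coe_toReal hx (hFp.1 x), ← EReal.coe_toReal hz (hFp.1 z)] at h1
  exact_mod_cast h1

/-- A strongly convex functional lies above its affine minorants by a quadratic: compare the
subgradient inequality at `l • z + (1 - l) • x` with strong convexity, divide by `l` and let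
`l → 0`. -/
lemma ediff_strong {F : X → EReal} (hFp : Proper F) {γ₁ : ℝ} (hF : StrongModulus F γ₁)
    {x ξ : X} (hξ : ξ ∈ ediff F x) (z : X) (hz : z ∈ edom F) :
    (F x).toReal + ⟪ξ, z - x⟫ + γ₁ / 2 * ‖z - x‖ ^ 2 ≤ (F z).toReal := by
  have hx : F x ≠ ⊤ := (ediff_real hFp hξ).1
  have key : ∀ l : ℝ, 0 < l → l < 1 →
      (F x).toReal + ⟪ξ, z - x⟫ + γ₁ / 2 * ‖z - x‖ ^ 2 * (1 - l) ≤ (F z).toReal := by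
    intro l hl hl1
    have h1 := hF z x l hl.le hl1.le
    have h2 := hξ (l • z + (1 - l) • x)
    have h3 : l • z + (1 - l) • x - x = l • (z - x) := by module
    rw [h3, inner_smul_right] at h2
    have h4 := (add_le_add_left h2
      ((γ₁ * l * (1 - l) * ‖z - x‖ ^ 2 / 2 : ℝ) : EReal)).trans h1
    rw [← EReal.coe_toReal hx (hFp.1 x), ← EReal.coe_toReal hz (hFp.1 z)] at h4
    have h5 : (F x).toReal + l * ⟪ξ, z - x⟫ + γ₁ * l * (1 - l) * ‖z - x‖ ^ 2 / 2
        ≤ l * (F z).toReal + (1 - l) * (F x).toReal := by exact_mod_cast h4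
    refine le_of_mul_le_mul_left ?_ hl
    linarith
  have hlim : Tendsto (fun l : ℝ => (F x).toReal + ⟪ξ, z - x⟫ + γ₁ / 2 * ‖z - x‖ ^ 2 * (1 - l))
      (nhdsWithin 0 (Set.Ioi 0))
      (nhds ((F x).toReal + ⟪ξ, z - x⟫ + γ₁ / 2 * ‖z - x‖ ^ 2 * (1 - 0))) := by
    apply tendsto_nhdsWithin_of_tendsto_nhds
    apply Continuous.tendsto
    fun_prop
  rw [sub_zero, mul_one] at hlim
  refine le_of_tendsto hlim ?_
  filter_upwards [Ioo_mem_nhdsGT (zero_lt_one' ℝ)] with l hl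
  exact key l hl.1 hl.2

/-- The Lagrangian gap at `(x, y)` against any `(x', y')`, bounded through residuals `A`, `B` of
the optimality system at `(x, y)`. At a saddle point, `A = 0` and `B = 0` are admissible. -/
lemma gap_le_residual {F : X → EReal} {G : Y → EReal} (K : X →L[ℝ] Y)
    (hFp : Proper F) (hGp : Proper G) {γ₁ : ℝ} (hF : StrongModulus F γ₁)
    {x A : X} {y B : Y} (hA : A - K.adjoint y ∈ ediff F x) (hB : B + K x ∈ ediff G y)
    {x' : X} {y' : Y} (hx' : x' ∈ edom F) (hy' : y' ∈ edom G) :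
    ⟪K x, y'⟫ - ⟪K x', y⟫ - (G y').toReal - (F x').toReal + (F x).toReal + (G y).toReal
      + γ₁ / 2 * ‖x - x'‖ ^ 2 ≤ ⟪A, x - x'⟫ + ⟪B, y - y'⟫ := by
  have h1 := ediff_strong hFp hF hA x' hx'
  have h2 := (ediff_real hGp hB).2 y' hy'
  rw [norm_sub_rev x x']
  simp only [inner_sub_left, inner_sub_right, inner_add_left,
    ContinuousLinearMap.adjoint_inner_left] at h1 h2 ⊢
  rw [real_inner_comm (K x) y, real_inner_comm (K x') y] at h1
  linarith

/-! ### One step of the iteration -/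

/-- The exact energy identity of one step. Here `e`, `f` are the errors of the new iterate, `a`,
`b` the increments `x̂ - x̄`, `ŷ - ȳ`, and `P = K* (f - μ b)`, `Q = K (e - θ a)`, which enter only
through the adjointness relation `hPQ`. -/
lemma energy_identity {σ τ θ μ γ : ℝ} (hμ : μ * θ = 1) (hμ2 : μ ^ 2 = 1 + σ * γ)
    (e a P : X) (f b Q : Y) (hPQ : ⟪e, P⟫ - θ * ⟪a, P⟫ = ⟪f, Q⟫ - μ * ⟪b, Q⟫) :
    τ * μ ^ 2 * ‖e - (σ * θ) • P‖ ^ 2 + σ * ‖f + (τ * μ) • Q‖ ^ 2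
      + τ * ‖a‖ ^ 2 + σ * ‖b‖ ^ 2 - γ * σ * τ * ‖e‖ ^ 2 - γ * σ ^ 2 * τ ^ 2 * ‖Q‖ ^ 2
      - 2 * γ * σ ^ 2 * τ * ⟪b, Q⟫
      + 2 * τ * ⟪a, e - (σ * θ) • P⟫ + 2 * σ * ⟪b, f + (τ * μ) • Q⟫
      = τ * ‖a + e - σ • P‖ ^ 2 + σ * ‖b + f + τ • Q‖ ^ 2 := by
  simp only [← real_inner_self_eq_norm_sq, inner_sub_left, inner_sub_right, inner_add_left,
    inner_add_right, inner_smul_left, inner_smul_right, RCLike.conj_to_real]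
  rw [real_inner_comm a P, real_inner_comm e P, real_inner_comm b Q, real_inner_comm f Q,
    real_inner_comm a e, real_inner_comm b f]
  linear_combination (-2 * τ * σ * (μ - 1)) * hPQ
    + (τ * σ ^ 2 * (μ * θ + 1) * ⟪P, P⟫ - 2 * τ * σ * μ * ⟪e, P⟫ - 2 * τ * σ * ⟪a, P⟫) * hμ
    + (2 * σ * τ * ⟪b, Q⟫ + σ * τ ^ 2 * ⟪Q, Q⟫ + τ * ⟪e, e⟫) * hμ2

/-- The energy identity combined with strong monotonicity of the optimality system, `hI`. -/
lemma energy_descent (K : X →L[ℝ] Y) {σ τ θ μ γ γ₁ : ℝ} (hσ : 0 < σ) (hτ : 0 < τ)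
    (hθ : 0 < θ) (hμ : μ * θ = 1) (hμ2 : μ ^ 2 = 1 + σ * γ) (e a : X) (f b : Y)
    (hI : γ₁ * ‖e‖ ^ 2 ≤ ⟪σ⁻¹ • a + μ • K.adjoint b, e⟫ + ⟪τ⁻¹ • b - θ • K a, f⟫) :
    ‖e - (σ * θ) • K.adjoint (f - μ • b)‖ ^ 2 / (σ * θ) ^ 2
      + ‖f + (τ * μ) • K (e - θ • a)‖ ^ 2 / (σ * τ)
      + ‖a‖ ^ 2 / σ ^ 2 + ‖b‖ ^ 2 / (σ * τ)
      + ((2 * γ₁ - γ) * ‖e‖ ^ 2 - γ * (σ * τ) * ‖K (e - θ • a)‖ ^ 2) / σ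
      - 2 * γ * ⟪b, K (e - θ • a)⟫
      ≤ ‖a + e - σ • K.adjoint (f - μ • b)‖ ^ 2 / σ ^ 2
        + ‖b + f + τ • K (e - θ • a)‖ ^ 2 / (σ * τ) := by
  have hPQ : ⟪e, K.adjoint (f - μ • b)⟫ - θ * ⟪a, K.adjoint (f - μ • b)⟫
      = ⟪f, K (e - θ • a)⟫ - μ * ⟪b, K (e - θ • a)⟫ := by
    simp only [ContinuousLinearMap.adjoint_inner_right, map_sub, map_smul, inner_sub_right,
      inner_smul_right]
    rw [real_inner_comm (K e) f, real_inner_comm (K e) b, real_inner_comm (K a) f,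
      real_inner_comm (K a) b]
    ring
  have hid := energy_identity (τ := τ) hμ hμ2 e a _ f b _ hPQ
  have hcross : ⟪σ⁻¹ • a + μ • K.adjoint b, e⟫ + ⟪τ⁻¹ • b - θ • K a, f⟫
      = σ⁻¹ * ⟪a, e - (σ * θ) • K.adjoint (f - μ • b)⟫
        + τ⁻¹ * ⟪b, f + (τ * μ) • K (e - θ • a)⟫ := by
    simp only [inner_sub_left, inner_add_left, inner_sub_right, inner_add_right, inner_smul_left,
      inner_smul_right, map_sub, map_smul, RCLike.conj_to_real,
      ContinuousLinearMap.adjoint_inner_left, ContinuousLinearMap.adjoint_inner_right]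
    rw [real_inner_comm (K a) b]
    field_simp
    ring
  rw [hcross] at hI
  generalize K.adjoint (f - μ • b) = P at *
  generalize K (e - θ • a) = Q at *
  have hI2 : σ * τ * γ₁ * ‖e‖ ^ 2 ≤ τ * ⟪a, e - (σ * θ) • P⟫ + σ * ⟪b, f + (τ * μ) • Q⟫ := by
    have := mul_le_mul_of_nonneg_left hI (mul_pos hσ hτ).le
    calc _ = σ * τ * (γ₁ * ‖e‖ ^ 2) := by ring
      _ ≤ _ := this
      _ = _ := by field_simp
  have hs : 0 < σ ^ 2 * τ := by positivity
  refine le_of_mul_le_mul_left ?_ hs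
  have hl : σ ^ 2 * τ * (‖e - (σ * θ) • P‖ ^ 2 / (σ * θ) ^ 2
      + ‖f + (τ * μ) • Q‖ ^ 2 / (σ * τ)
      + ‖a‖ ^ 2 / σ ^ 2 + ‖b‖ ^ 2 / (σ * τ)
      + ((2 * γ₁ - γ) * ‖e‖ ^ 2 - γ * (σ * τ) * ‖Q‖ ^ 2) / σ
      - 2 * γ * ⟪b, Q⟫) = τ * μ ^ 2 * ‖e - (σ * θ) • P‖ ^ 2 + σ * ‖f + (τ * μ) • Q‖ ^ 2
      + τ * ‖a‖ ^ 2 + σ * ‖b‖ ^ 2 + σ * τ * (2 * γ₁ - γ) * ‖e‖ ^ 2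
      - γ * σ ^ 2 * τ ^ 2 * ‖Q‖ ^ 2 - 2 * γ * σ ^ 2 * τ * ⟪b, Q⟫ := by
    have h : μ = θ⁻¹ := eq_inv_of_mul_eq_one_left hμ
    rw [h]
    field_simp
    ring
  have hr : σ ^ 2 * τ * (‖a + e - σ • P‖ ^ 2 / σ ^ 2 + ‖b + f + τ • Q‖ ^ 2 / (σ * τ))
      = τ * ‖a + e - σ • P‖ ^ 2 + σ * ‖b + f + τ • Q‖ ^ 2 := by
    field_simp
  rw [hl, hr]
  linarith

/-- The indefinite terms of the energy inequality are dominated by the definite ones, provided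
`σ` is small; `ε` splits `‖e - θ a‖²` between `e` and `a`. -/
lemma absorb (K : X →L[ℝ] Y) {σ s θ γ γ₁ ε : ℝ} (hσ : 0 < σ) (hs : 0 < s) (hθ : 0 < θ)
    (hθ1 : θ ≤ 1) (hγ : 0 < γ) (hε : 0 < ε)
    (h1 : s * ‖K‖ ^ 2 * (γ + 2 * γ ^ 2 * σ) * (1 + ε) ≤ 2 * γ₁ - γ)
    (h2 : σ * (s * ‖K‖ ^ 2 * (γ + 2 * γ ^ 2 * σ) * (1 + ε⁻¹)) ≤ 1 / 2)
    (e a : X) (b : Y) :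
    (1 / 2) * (‖a‖ ^ 2 / σ ^ 2) + (1 / 2) * (‖b‖ ^ 2 / s) ≤
      ‖a‖ ^ 2 / σ ^ 2 + ‖b‖ ^ 2 / s
      + ((2 * γ₁ - γ) * ‖e‖ ^ 2 - γ * s * ‖K (e - θ • a)‖ ^ 2) / σ
      - 2 * γ * ⟪b, K (e - θ • a)⟫ := by
  have hQ : ‖K (e - θ • a)‖ ^ 2 ≤ ‖K‖ ^ 2 * ((1 + ε) * ‖e‖ ^ 2 + (1 + ε⁻¹) * ‖a‖ ^ 2) := by
    have h3 : ‖e - θ • a‖ ≤ ‖e‖ + ‖a‖ := by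
      refine (norm_sub_le _ _).trans ?_
      rw [norm_smul, Real.norm_of_nonneg hθ.le]
      have := mul_le_mul_of_nonneg_right hθ1 (norm_nonneg a)
      linarith
    have h4 : (‖e‖ + ‖a‖) ^ 2 ≤ (1 + ε) * ‖e‖ ^ 2 + (1 + ε⁻¹) * ‖a‖ ^ 2 := by
      have h5 : (1 + ε) * ‖e‖ ^ 2 + (1 + ε⁻¹) * ‖a‖ ^ 2 - (‖e‖ + ‖a‖) ^ 2
          = ε⁻¹ * (ε * ‖e‖ - ‖a‖) ^ 2 := by field_simp; ring
      have h6 : 0 ≤ ε⁻¹ * (ε * ‖e‖ - ‖a‖) ^ 2 := by positivity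
      linarith
    calc ‖K (e - θ • a)‖ ^ 2 ≤ (‖K‖ * (‖e‖ + ‖a‖)) ^ 2 := by
          gcongr
          exact (K.le_opNorm _).trans (by gcongr)
      _ = ‖K‖ ^ 2 * (‖e‖ + ‖a‖) ^ 2 := by ring
      _ ≤ _ := by gcongr
  generalize K (e - θ • a) = Q at *
  have hY : 2 * γ * ⟪b, Q⟫ ≤ (1 / 2) * (‖b‖ ^ 2 / s) + 2 * γ ^ 2 * s * ‖Q‖ ^ 2 := by
    have h3 := real_inner_le_norm b Q
    have h4 : (1 / 2) * (‖b‖ ^ 2 / s) + 2 * γ ^ 2 * s * ‖Q‖ ^ 2 - 2 * γ * (‖b‖ * ‖Q‖)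
        = (‖b‖ - 2 * γ * s * ‖Q‖) ^ 2 / (2 * s) := by field_simp; ring
    have h5 : 0 ≤ (‖b‖ - 2 * γ * s * ‖Q‖) ^ 2 / (2 * s) := by positivity
    have h6 := mul_le_mul_of_nonneg_left h3 (by positivity : 0 ≤ 2 * γ)
    linarith
  have hmain : (γ + 2 * γ ^ 2 * σ) * s * ‖Q‖ ^ 2
      ≤ (2 * γ₁ - γ) * ‖e‖ ^ 2 + (1 / 2) * (‖a‖ ^ 2 / σ) := by
    have h3 := mul_le_mul_of_nonneg_left hQ (by positivity : 0 ≤ (γ + 2 * γ ^ 2 * σ) * s)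
    have h4 := mul_le_mul_of_nonneg_right h1 (sq_nonneg ‖e‖)
    have h5 := mul_le_mul_of_nonneg_right h2 (by positivity : 0 ≤ ‖a‖ ^ 2 / σ)
    have h6 : σ * (s * ‖K‖ ^ 2 * (γ + 2 * γ ^ 2 * σ) * (1 + ε⁻¹)) * (‖a‖ ^ 2 / σ)
        = s * ‖K‖ ^ 2 * (γ + 2 * γ ^ 2 * σ) * (1 + ε⁻¹) * ‖a‖ ^ 2 := by
      generalize ε⁻¹ = ε'
      field_simp
    rw [h6] at h5
    linarith
  have hdiv : ((γ + 2 * γ ^ 2 * σ) * s * ‖Q‖ ^ 2) / σ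
      ≤ ((2 * γ₁ - γ) * ‖e‖ ^ 2 + (1 / 2) * (‖a‖ ^ 2 / σ)) / σ := by gcongr
  have e1 : ((γ + 2 * γ ^ 2 * σ) * s * ‖Q‖ ^ 2) / σ
      = γ * s * ‖Q‖ ^ 2 / σ + 2 * γ ^ 2 * s * ‖Q‖ ^ 2 := by field_simp
  have e2 : ((2 * γ₁ - γ) * ‖e‖ ^ 2 + (1 / 2) * (‖a‖ ^ 2 / σ)) / σ
      = (2 * γ₁ - γ) * ‖e‖ ^ 2 / σ + (1 / 2) * (‖a‖ ^ 2 / σ ^ 2) := by field_simp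
  rw [e1, e2] at hdiv
  rw [sub_div]
  linarith

/-- The errors `e`, `f` are controlled by the transformed variables `ξ`, `η` in the energy:
eliminating `f` gives `e + p q K* K e = R`, and `I + p q K* K` does not decrease norms. -/
lemma recover (K : X →L[ℝ] Y) {p q θ μ : ℝ} (hp : 0 < p) (hq : 0 < q) (hθ : 0 < θ)
    (hθ1 : θ ≤ 1) (hμ : 0 < μ) {e a ξ : X} {f b η : Y}
    (hξ : ξ = e - p • K.adjoint (f - μ • b)) (hη : η = f + q • K (e - θ • a)) :
    ‖e‖ ≤ ‖ξ‖ + p * (‖K‖ * (‖η‖ + μ * ‖b‖)) + p * q * (‖K‖ * (‖K‖ * ‖a‖)) ∧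
    ‖f‖ ≤ ‖η‖ + q * (‖K‖ * (‖e‖ + ‖a‖)) := by
  have hθa : ‖θ • a‖ ≤ ‖a‖ := by
    rw [norm_smul, Real.norm_of_nonneg hθ.le]
    exact mul_le_of_le_one_left (norm_nonneg a) hθ1
  have hKa : ∀ y : Y, ‖K.adjoint y‖ ≤ ‖K‖ * ‖y‖ := fun y => by
    have := K.adjoint.le_opNorm y
    rwa [LinearIsometryEquiv.norm_map] at this
  constructor
  · set R := ξ + p • K.adjoint (η - μ • b) + (p * q) • K.adjoint (K (θ • a)) with hR
    have hRe : e + (p * q) • K.adjoint (K e) = R := by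
      rw [hR, hξ, hη]
      simp only [map_sub, map_add, map_smul]
      module
    have h1 : ‖e‖ ^ 2 ≤ ‖R‖ * ‖e‖ := by
      refine le_trans ?_ (real_inner_le_norm R e)
      rw [← hRe, inner_add_left, inner_smul_left, ContinuousLinearMap.adjoint_inner_left,
        real_inner_self_eq_norm_sq, real_inner_self_eq_norm_sq]
      have : 0 ≤ p * q * ‖K e‖ ^ 2 := by positivity
      simpa using this
    have h2 : ‖e‖ ≤ ‖R‖ := by
      rcases (norm_nonneg e).eq_or_lt with h | h
      · rw [← h]; exact norm_nonneg _
      · exact le_of_mul_le_mul_right (by rwa [sq] at h1) h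
    refine h2.trans ((norm_add₃_le).trans ?_)
    rw [norm_smul, norm_smul, Real.norm_of_nonneg hp.le, Real.norm_of_nonneg (mul_pos hp hq).le]
    gcongr
    · refine (hKa _).trans ?_
      gcongr
      refine (norm_sub_le _ _).trans ?_
      rw [norm_smul, Real.norm_of_nonneg hμ.le]
    · refine (hKa _).trans ?_
      gcongr
      exact (K.le_opNorm _).trans (by gcongr)
  · have hf : f = η - q • K (e - θ • a) := by rw [hη]; abel
    rw [hf]
    refine (norm_sub_le _ _).trans ?_
    rw [norm_smul, Real.norm_of_nonneg hq.le]
    gcongr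
    refine (K.le_opNorm _).trans ?_
    gcongr
    exact (norm_sub_le _ _).trans (by gcongr)

/-! ### Step sizes -/

/-- The step sizes: `σ` decays at least like `1 / k`, and the product `σ τ` is constant. -/
lemma step_sizes {γ : ℝ} {σ τ θ : ℕ → ℝ} (hγ : 0 < γ) (hσ0 : 0 < σ 0) (hτ0 : 0 < τ 0)
    (hθ : ∀ k : ℕ, θ k = 1 / Real.sqrt (1 + σ k * γ))
    (hσ : ∀ k : ℕ, σ (k+1) = θ k * σ k) (hτ : ∀ k : ℕ, τ (k+1) = τ k / θ k) :
    (∀ k, 0 < σ k) ∧ (∀ k, 0 < τ k) ∧ (∀ k, 0 < θ k) ∧ (∀ k, θ k ≤ 1) ∧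
      (∀ k, σ k * τ k = σ 0 * τ 0) ∧ (∀ k, ((θ k)⁻¹) ^ 2 = 1 + σ k * γ) ∧
      (∀ k, (θ k)⁻¹ ≤ 1 + σ 0 * γ) ∧ ∃ C > 0, ∀ k : ℕ, ((k : ℝ) + 1) * σ k ≤ C := by
  have hσp : ∀ k, 0 < σ k := by
    intro k
    induction k with
    | zero => exact hσ0
    | succ k ih =>
      rw [hσ, hθ]
      have : 0 < 1 + σ k * γ := by positivity
      have := Real.sqrt_pos.2 this
      positivity
  have hθp : ∀ k, 0 < θ k := by
    intro k
    rw [hθ]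
    have : 0 < 1 + σ k * γ := by have := hσp k; positivity
    have := Real.sqrt_pos.2 this
    positivity
  have hμ2 : ∀ k, ((θ k)⁻¹) ^ 2 = 1 + σ k * γ := by
    intro k
    rw [hθ, one_div, inv_inv, Real.sq_sqrt]
    have := hσp k; positivity
  have hμ1 : ∀ k, 1 ≤ (θ k)⁻¹ := by
    intro k
    have h1 := hμ2 k
    have h2 : 0 < σ k * γ := mul_pos (hσp k) hγ
    have h3 := inv_pos.2 (hθp k)
    nlinarith
  have hθ1 : ∀ k, θ k ≤ 1 := fun k => (one_le_inv₀ (hθp k)).1 (hμ1 k)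
  have hτp : ∀ k, 0 < τ k := by
    intro k
    induction k with
    | zero => exact hτ0
    | succ k ih => rw [hτ]; exact div_pos ih (hθp k)
  have hσ_le : ∀ k, σ k ≤ σ 0 := by
    intro k
    induction k with
    | zero => exact le_rfl
    | succ k ih =>
      rw [hσ]
      exact (mul_le_of_le_one_left (hσp k).le (hθ1 k)).trans ih
  have hμM : ∀ k, (θ k)⁻¹ ≤ 1 + σ 0 * γ := by
    intro k
    have h1 : (θ k)⁻¹ ≤ ((θ k)⁻¹) ^ 2 := by have := hμ1 k; nlinarith
    rw [hμ2] at h1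
    have := mul_le_mul_of_nonneg_right (hσ_le k) hγ.le
    linarith
  refine ⟨hσp, hτp, hθp, hθ1, ?_, hμ2, hμM, ?_⟩
  · intro k
    induction k with
    | zero => rfl
    | succ k ih =>
      rw [hσ, hτ, ← ih]
      have := (hθp k).ne'
      field_simp
  · -- each step increases `1 / σ` by `(θ⁻¹ - 1) / σ = γ / (θ⁻¹ + 1)`
    set c := γ / (2 + σ 0 * γ) with hc
    have hcp : 0 < c := by positivity
    set m := min c (σ 0)⁻¹ with hm
    have hmp : 0 < m := lt_min hcp (inv_pos.2 hσ0)
    have key : ∀ k : ℕ, ((k : ℝ) + 1) * m ≤ (σ k)⁻¹ := by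
      intro k
      induction k with
      | zero =>
        have : m ≤ (σ 0)⁻¹ := min_le_right _ _
        simpa using this
      | succ k ih =>
        have h1 : (σ (k+1))⁻¹ = (σ k)⁻¹ + γ / ((θ k)⁻¹ + 1) := by
          have h2 := hμ2 k
          have h3 : 0 < (θ k)⁻¹ := inv_pos.2 (hθp k)
          rw [hσ, mul_inv]
          have h4 := hσp k
          generalize (θ k)⁻¹ = μ at *
          field_simp
          linarith
        have h2 : c ≤ γ / ((θ k)⁻¹ + 1) := by
          have h3 : 0 < (θ k)⁻¹ := inv_pos.2 (hθp k)
          exact div_le_div_of_nonneg_left hγ.le (by positivity) (by linarith [hμM k])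
        have h3 : m ≤ c := min_le_left _ _
        rw [h1]
        push_cast
        linarith
    refine ⟨m⁻¹, inv_pos.2 hmp, fun k => ?_⟩
    have h1 := mul_le_mul_of_nonneg_right (key k) (hσp k).le
    rw [inv_mul_cancel₀ (hσp k).ne'] at h1
    rw [← one_div, le_div_iff₀ hmp]
    linarith

lemma tendsto_zero_of_descent {V c : ℕ → ℝ} (hV : ∀ k, 0 ≤ V k) (hc : ∀ k, 0 ≤ c k)
    (h : ∀ᶠ k in atTop, V (k+1) + c k ≤ V k) :
    Tendsto c atTop (nhds 0) ∧ ∃ B > 0, ∀ᶠ k in atTop, V k ≤ B := by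
  obtain ⟨N, hN⟩ := eventually_atTop.1 h
  have hanti : Antitone (fun k => V (k + N)) := by
    refine antitone_nat_of_succ_le fun k => ?_
    have h1 := hN (k + N) (Nat.le_add_left _ _)
    have h2 := hc (k + N)
    rw [show k + 1 + N = k + N + 1 by ring]
    linarith
  have hbdd : BddBelow (Set.range fun k => V (k + N)) := ⟨0, by rintro _ ⟨k, rfl⟩; exact hV _⟩
  have hlim := tendsto_atTop_ciInf hanti hbdd
  rw [tendsto_add_atTop_iff_nat] at hlim
  refine ⟨?_, V N + 1, by linarith [hV N], ?_⟩
  · have hd := hlim.sub ((tendsto_add_atTop_iff_nat 1).2 hlim)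
    rw [sub_self] at hd
    refine squeeze_zero' (Eventually.of_forall hc) ?_ hd
    filter_upwards [h] with k hk
    linarith
  · filter_upwards [eventually_ge_atTop N] with k hk
    have := hanti (Nat.zero_le (k - N))
    simp only [Nat.sub_add_cancel hk, zero_add] at this
    linarith

/-! ### Bounds in the extended reals -/

lemma gap_bounds {F : X → EReal} {G : Y → EReal} (K : X →L[ℝ] Y)
    (hFp : Proper F) (hGp : Proper G) {X₀ : Set X} {Y₀ : Set Y} {xs x : X} {ys y : Y}
    (hxs : xs ∈ X₀) (hys : ys ∈ Y₀) (hx : x ∈ edom F) (hy : y ∈ edom G) {r : ℝ}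
    (h0 : 0 ≤ ⟪K x, ys⟫ - ⟪K xs, y⟫ - (G ys).toReal - (F xs).toReal + (F x).toReal
      + (G y).toReal)
    (hr : ∀ x' ∈ X₀, ∀ y' ∈ Y₀, ⟪K x, y'⟫ - ⟪K x', y⟫ - (G y').toReal - (F x').toReal
      + (F x).toReal + (G y).toReal ≤ r) :
    0 ≤ gap K F G X₀ Y₀ x y ∧ gap K F G X₀ Y₀ x y ≤ (r : EReal) := by
  unfold gap
  rw [← EReal.coe_toReal hx (hFp.1 x), ← EReal.coe_toReal hy (hGp.1 y)]
  constructor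
  · refine le_iSup₂_of_le xs hxs (le_iSup₂_of_le ys hys ?_)
    exact_mod_cast h0
  · refine iSup₂_le fun x' hx' => iSup₂_le fun y' hy' => ?_
    exact_mod_cast hr x' hx' y' hy'

/-- At `xs` the supremum over `Y₀` is attained at `ys`, hence finite; at `x` it is finite by the
bound `r`. So the restricted primal error is a difference of real numbers, without `⊤ - ⊤`. -/
lemma epRestr_bounds {F : X → EReal} {G : Y → EReal} (K : X →L[ℝ] Y)
    (hFp : Proper F) (hGp : Proper G) {Y₀ : Set Y} (hY₀ : Y₀ ⊆ edom G) {xs x : X} {ys : Y}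
    (hsaddle : IsSaddle K F G xs ys) (hys : ys ∈ Y₀) (hx : x ∈ edom F) {r : ℝ}
    (hr : ∀ y' ∈ Y₀, ⟪K x, y'⟫ - (G y').toReal + (F x).toReal - (F xs).toReal - ⟪K xs, ys⟫
      + (G ys).toReal ≤ r) :
    0 ≤ epRestr K F G Y₀ xs x ∧ epRestr K F G Y₀ xs x ≤ (r : EReal) := by
  obtain ⟨hxsF, hysG, h1, h2⟩ := hsaddle
  have hA : (⨆ y' ∈ Y₀, ((⟪K xs, y'⟫ - (G y').toReal : ℝ) : EReal))
      = ((⟪K xs, ys⟫ - (G ys).toReal : ℝ) : EReal) := by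
    refine le_antisymm (iSup₂_le fun y' hy' => ?_) (le_iSup₂_of_le ys hys le_rfl)
    have := (ediff_real hGp h2).2 y' (hY₀ hy')
    rw [inner_sub_right] at this
    rw [EReal.coe_le_coe_iff]
    linarith
  have hF0 := (ediff_real hFp h1).2 x hx
  rw [inner_neg_left, ContinuousLinearMap.adjoint_inner_left, map_sub, inner_sub_right,
    real_inner_comm (K x) ys, real_inner_comm (K xs) ys] at hF0
  have hlow : ((⟪K x, ys⟫ - (G ys).toReal : ℝ) : EReal)
      ≤ ⨆ y' ∈ Y₀, ((⟪K x, y'⟫ - (G y').toReal : ℝ) : EReal) := le_iSup₂_of_le ys hys le_rfl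
  have hup : (⨆ y' ∈ Y₀, ((⟪K x, y'⟫ - (G y').toReal : ℝ) : EReal))
      ≤ ((r - (F x).toReal + (F xs).toReal + ⟪K xs, ys⟫ - (G ys).toReal : ℝ) : EReal) := by
    refine iSup₂_le fun y' hy' => ?_
    rw [EReal.coe_le_coe_iff]
    linarith [hr y' hy']
  unfold epRestr
  rw [hA]
  generalize (⨆ y' ∈ Y₀, ((⟪K x, y'⟫ - (G y').toReal : ℝ) : EReal)) = S at *
  have hS : S ≠ ⊤ := ne_top_of_le_ne_top (EReal.coe_ne_top _) hup
  have hS' : S ≠ ⊥ := ne_bot_of_le_ne_bot (EReal.coe_ne_bot _) hlow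
  lift S to ℝ using ⟨hS, hS'⟩
  rw [EReal.coe_le_coe_iff] at hlow hup
  rw [← EReal.coe_toReal hx (hFp.1 x), ← EReal.coe_toReal hxsF (hFp.1 xs)]
  constructor
  · have : 0 ≤ ((F x).toReal + S) - ((F xs).toReal + (⟪K xs, ys⟫ - (G ys).toReal)) := by
      linarith
    exact_mod_cast this
  · have : ((F x).toReal + S) - ((F xs).toReal + (⟪K xs, ys⟫ - (G ys).toReal)) ≤ r := by
      linarith
    exact_mod_cast this

/-! ### Asymptotics of the iteration -/

/-- Consequences of the energy inequality: the increments satisfy `a = o(σ)` and `b → 0`, while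
the errors satisfy `e = O(σ)` and `f = O(1)`. The vectors `ξ`, `η` are the transformed variables
whose weighted norms form the energy. -/
lemma asymptotics (K : X →L[ℝ] Y) {γ γ₁ : ℝ} {σ τ θ : ℕ → ℝ} (hγ0 : 0 < γ)
    (hγ : γ < 2 * γ₁ / (1 + σ 0 * τ 0 * ‖K‖ ^ 2)) (hσ0 : 0 < σ 0) (hτ0 : 0 < τ 0)
    (hθ : ∀ k : ℕ, θ k = 1 / Real.sqrt (1 + σ k * γ))
    (hσ : ∀ k : ℕ, σ (k+1) = θ k * σ k) (hτ : ∀ k : ℕ, τ (k+1) = τ k / θ k)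
    {e a ξ : ℕ → X} {f b η : ℕ → Y}
    (hI : ∀ k, γ₁ * ‖e k‖ ^ 2 ≤ ⟪(σ k)⁻¹ • a k + (θ k)⁻¹ • K.adjoint (b k), e k⟫
      + ⟪(τ k)⁻¹ • b k - θ k • K (a k), f k⟫)
    (hξ : ∀ k, ξ k = a k + e k - σ k • K.adjoint (f k - (θ k)⁻¹ • b k))
    (hξ' : ∀ k, ξ (k+1) = e k - (σ k * θ k) • K.adjoint (f k - (θ k)⁻¹ • b k))
    (hη : ∀ k, η k = b k + f k + τ k • K (e k - θ k • a k))
    (hη' : ∀ k, η (k+1) = f k + (τ k * (θ k)⁻¹) • K (e k - θ k • a k)) :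
    Tendsto (fun k => ‖a k‖ / σ k) atTop (nhds 0) ∧ Tendsto (fun k => ‖b k‖) atTop (nhds 0) ∧
      ∃ C > 0, ∀ᶠ k in atTop, ‖e k‖ ≤ C * σ k ∧ ‖f k‖ ≤ C := by
  obtain ⟨hσp, hτp, hθp, hθ1, hs, hμ2, hμM, C₀, hC₀, hkσ⟩ := step_sizes hγ0 hσ0 hτ0 hθ hσ hτ
  set s := σ 0 * τ 0 with hsdef
  have hsp : 0 < s := mul_pos hσ0 hτ0
  have hσlim : Tendsto σ atTop (nhds 0) := by
    have h1 : Tendsto (fun k : ℕ => C₀ * (1 / ((k : ℝ) + 1))) atTop (nhds (C₀ * 0)) :=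
      tendsto_one_div_add_atTop_nhds_zero_nat.const_mul C₀
    rw [mul_zero] at h1
    refine squeeze_zero (fun k => (hσp k).le) (fun k => ?_) h1
    rw [mul_one_div, le_div_iff₀ (by positivity)]
    linarith [hkσ k]
  have hdescent : ∀ᶠ k in atTop, (‖ξ (k+1)‖ ^ 2 / σ (k+1) ^ 2 + ‖η (k+1)‖ ^ 2 / s)
      + ((1 / 2) * (‖a k‖ ^ 2 / σ k ^ 2) + (1 / 2) * (‖b k‖ ^ 2 / s))
      ≤ ‖ξ k‖ ^ 2 / σ k ^ 2 + ‖η k‖ ^ 2 / s := by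
    set κ := s * ‖K‖ ^ 2 with hκ
    have hκ0 : 0 ≤ κ := by positivity
    have hδ : 0 < 2 * γ₁ - γ - κ * γ := by
      rw [lt_div_iff₀ (by positivity)] at hγ
      linarith
    -- half of the slack left by the bound on `γ` is spent on `ε`, the rest on small `σ`
    set ε := (2 * γ₁ - γ - κ * γ) / (2 * (κ * γ + 1)) with hε
    have hεp : 0 < ε := by positivity
    have hεκ : κ * γ * (1 + ε) < 2 * γ₁ - γ := by
      have h1 : ε * (2 * (κ * γ + 1)) = 2 * γ₁ - γ - κ * γ := by
        rw [hε]; field_simp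
      nlinarith
    have l1 : Tendsto (fun k => κ * (γ + 2 * γ ^ 2 * σ k) * (1 + ε)) atTop
        (nhds (κ * (γ + 2 * γ ^ 2 * 0) * (1 + ε))) :=
      (((hσlim.const_mul _).const_add _).const_mul _).mul_const _
    have l2 : Tendsto (fun k => σ k * (κ * (γ + 2 * γ ^ 2 * σ k) * (1 + ε⁻¹))) atTop
        (nhds (0 * (κ * (γ + 2 * γ ^ 2 * 0) * (1 + ε⁻¹)))) :=
      hσlim.mul ((((hσlim.const_mul _).const_add _).const_mul _).mul_const _)
    rw [mul_zero, add_zero] at l1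
    rw [zero_mul] at l2
    filter_upwards [l1.eventually_le_const hεκ,
      l2.eventually_le_const (by norm_num : (0 : ℝ) < 1 / 2)] with k h1 h2
    have hd := energy_descent K (hσp k) (hτp k) (hθp k) (inv_mul_cancel₀ (hθp k).ne') (hμ2 k)
      (e k) (a k) (f k) (b k) (hI k)
    have hab := absorb K (hσp k) hsp (hθp k) (hθ1 k) hγ0 hεp h1 h2 (e k) (a k) (b k)
    rw [hs k, ← hξ k, ← hξ' k, ← hη k, ← hη' k, mul_comm (σ k) (θ k), ← hσ k] at hd
    linarith
  obtain ⟨hc, B, hB, hVB⟩ := tendsto_zero_of_descent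
    (V := fun k => ‖ξ k‖ ^ 2 / σ k ^ 2 + ‖η k‖ ^ 2 / s)
    (c := fun k => (1 / 2) * (‖a k‖ ^ 2 / σ k ^ 2) + (1 / 2) * (‖b k‖ ^ 2 / s))
    (fun k => by positivity) (fun k => by positivity) hdescent
  have ha : Tendsto (fun k => ‖a k‖ / σ k) atTop (nhds 0) := by
    have h1 := (hc.const_mul 2).sqrt
    rw [mul_zero, Real.sqrt_zero] at h1
    refine squeeze_zero (fun k => div_nonneg (norm_nonneg _) (hσp k).le) (fun k => ?_) h1
    refine Real.le_sqrt_of_sq_le ?_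
    have : 0 ≤ ‖b k‖ ^ 2 / s := by positivity
    rw [div_pow]
    linarith
  have hb : Tendsto (fun k => ‖b k‖) atTop (nhds 0) := by
    have h1 := (hc.const_mul (2 * s)).sqrt
    rw [mul_zero, Real.sqrt_zero] at h1
    refine squeeze_zero (fun k => norm_nonneg _) (fun k => ?_) h1
    refine Real.le_sqrt_of_sq_le ?_
    have h2 : 0 ≤ s * (‖a k‖ ^ 2 / σ k ^ 2) := by positivity
    have h3 : s * (‖b k‖ ^ 2 / s) = ‖b k‖ ^ 2 := by field_simp
    linarith
  refine ⟨ha, hb, ?_⟩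
  set M := 1 + σ 0 * γ with hM
  set E := Real.sqrt B + ‖K‖ * (Real.sqrt (B * s) + M) + s * (‖K‖ * ‖K‖) with hE
  have hMp : 0 < M := by positivity
  have hEp : 0 < E := by have := Real.sqrt_pos.2 hB; positivity
  refine ⟨E + (Real.sqrt (B * s) + s * M * (‖K‖ * (E + 1))), by positivity, ?_⟩
  filter_upwards [ha.eventually_le_const one_pos, hb.eventually_le_const one_pos,
    (tendsto_add_atTop_nat 1).eventually hVB] with k hak hbk hVk
  have hσk := hσp k
  have hθk := hθp k
  have hak' : ‖a k‖ ≤ σ k := by rwa [div_le_one hσk] at hak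
  have hσ1 : σ (k+1) ≤ σ k := by rw [hσ]; exact mul_le_of_le_one_left hσk.le (hθ1 k)
  have hσ1p := hσp (k+1)
  have hξk : ‖ξ (k+1)‖ ≤ Real.sqrt B * σ k := by
    have h1 : ‖ξ (k+1)‖ / σ (k+1) ≤ Real.sqrt B := by
      refine Real.le_sqrt_of_sq_le ?_
      have : 0 ≤ ‖η (k+1)‖ ^ 2 / s := by positivity
      rw [div_pow]
      linarith
    rw [div_le_iff₀ hσ1p] at h1
    exact h1.trans (by gcongr)
  have hηk : ‖η (k+1)‖ ≤ Real.sqrt (B * s) := by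
    refine Real.le_sqrt_of_sq_le ?_
    have : 0 ≤ ‖ξ (k+1)‖ ^ 2 / σ (k+1) ^ 2 := by positivity
    rw [← div_le_iff₀ hsp]
    linarith
  have hμp : 0 < (θ k)⁻¹ := inv_pos.2 hθk
  have hqp : 0 < τ k * (θ k)⁻¹ := mul_pos (hτp k) hμp
  have hpq : σ k * θ k * (τ k * (θ k)⁻¹) = s := by
    rw [← hs k]; field_simp
  obtain ⟨r1, r2⟩ := recover K (mul_pos hσk hθk) hqp hθk (hθ1 k) hμp (hξ' k) (hη' k)
  have hp : σ k * θ k ≤ σ k := mul_le_of_le_one_right hσk.le (hθ1 k)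
  have hek : ‖e k‖ ≤ E * σ k := by
    refine r1.trans ?_
    rw [hpq]
    calc _ ≤ Real.sqrt B * σ k + σ k * (‖K‖ * (Real.sqrt (B * s) + M * 1))
          + s * (‖K‖ * (‖K‖ * σ k)) := by
          gcongr
          exact hμM k
      _ = E * σ k := by rw [hE]; ring
  constructor
  · refine hek.trans ?_
    gcongr
    have : 0 ≤ Real.sqrt (B * s) + s * M * (‖K‖ * (E + 1)) := by positivity
    linarith
  · calc ‖f k‖ ≤ _ := r2
      _ ≤ Real.sqrt (B * s) + τ k * M * (‖K‖ * (E * σ k + σ k)) := by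
          have := hτp k
          gcongr
          exact hμM k
      _ = Real.sqrt (B * s) + (σ k * τ k) * M * (‖K‖ * (E + 1)) := by ring
      _ ≤ _ := by rw [hs k]; linarith

/-- The residuals of the optimality system at the new iterate, in terms of the increments
`a = x̂ - x̄` and `b = ŷ - ȳ`. -/
lemma residual_mem {F : X → EReal} {G : Y → EReal} (K : X →L[ℝ] Y) {σ τ θ : ℝ} (hσ : 0 < σ)
    (hτ : 0 < τ) {xh u ub : X} {yh v vb : Y}
    (h1 : σ⁻¹ • (xh - u) ∈ ediff F u) (h2 : τ⁻¹ • (yh - v) ∈ ediff G v)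
    (h3 : u - ub = σ • K.adjoint (v + θ⁻¹ • (vb - yh)))
    (h4 : v - vb = -(τ • K (u + θ • (ub - xh)))) :
    (σ⁻¹ • (xh - ub) + θ⁻¹ • K.adjoint (yh - vb)) - K.adjoint v ∈ ediff F u ∧
      (τ⁻¹ • (yh - vb) - θ • K (xh - ub)) + K u ∈ ediff G v := by
  have e1 : xh - u = (xh - ub) - (u - ub) := by abel
  have e2 : yh - v = (yh - vb) - (v - vb) := by abel
  constructor
  · convert h1 using 1
    rw [e1, h3, smul_sub _ (xh - ub), smul_smul, inv_mul_cancel₀ hσ.ne']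
    simp only [map_sub, map_add, map_smul]
    module
  · convert h2 using 1
    rw [e2, h4, smul_sub _ (yh - vb), smul_neg, smul_smul, inv_mul_cancel₀ hτ.ne']
    simp only [map_sub, map_add, map_smul]
    module

/-! ### Convergence of the gap and of the primal error -/

/-- Corollary: the restricted primal-dual gap vanishes along the accelerated
Douglas--Rachford iteration and the restricted primal error is `o(1/k)`. -/
theorem statement16
    (F : X → EReal) (G : Y → EReal) (K : X →L[ℝ] Y)
    (hFp : Proper F) (hFl : LowerSemicontinuous F)
    (hGp : Proper G) (hGl : LowerSemicontinuous G)
    (γ₁ : ℝ) (hγ₁ : 0 < γ₁) (hF : StrongModulus F γ₁)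
    (X₀ : Set X) (Y₀ : Set Y) (hX₀ : X₀ ⊆ edom F) (hY₀ : Y₀ ⊆ edom G)
    (hX₀b : Bornology.IsBounded X₀) (hY₀b : Bornology.IsBounded Y₀)
    (xs : X) (ys : Y) (hsaddle : IsSaddle K F G xs ys) (hxs : xs ∈ X₀) (hys : ys ∈ Y₀)
    (σ₀ τ₀ : ℝ) (hσ₀ : 0 < σ₀) (hτ₀ : 0 < τ₀)
    (γ : ℝ) (hγ0 : 0 < γ) (hγ : γ < 2 * γ₁ / (1 + σ₀ * τ₀ * ‖K‖ ^ 2))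
    (σ τ θ : ℕ → ℝ) (hσ0 : σ 0 = σ₀) (hτ0 : τ 0 = τ₀)
    (xh : ℕ → X) (yh : ℕ → Y) (u : ℕ → X) (v : ℕ → Y) (ub : ℕ → X) (vb : ℕ → Y)
    (hADR : IsADR K F G γ σ τ θ xh yh u v ub vb) :
    Tendsto (fun k : ℕ => gap K F G X₀ Y₀ (u k) (v k)) atTop (nhds (0 : EReal)) ∧
    Tendsto (fun k : ℕ => (((k : ℝ)) : EReal) * epRestr K F G Y₀ xs (u k)) atTop
      (nhds (0 : EReal)) := by
  subst hσ0 hτ0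
  obtain ⟨hθ, hσ, hτ, hstep⟩ := hADR
  obtain ⟨hσp, hτp, hθp, hθ1, hs, hμ2, hμM, C₀, hC₀, hkσ⟩ := step_sizes hγ0 hσ₀ hτ₀ hθ hσ hτ
  set a : ℕ → X := fun k => xh k - ub (k+1) with ha
  set b : ℕ → Y := fun k => yh k - vb (k+1) with hb
  set A : ℕ → X := fun k => (σ k)⁻¹ • a k + (θ k)⁻¹ • K.adjoint (b k) with hA
  set B : ℕ → Y := fun k => (τ k)⁻¹ • b k - θ k • K (a k) with hB
  have hres : ∀ k, A k - K.adjoint (v (k+1)) ∈ ediff F (u (k+1)) ∧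
      B k + K (u (k+1)) ∈ ediff G (v (k+1)) := fun k => by
    obtain ⟨h1, h2, h3, h4, -, -⟩ := hstep k
    exact residual_mem K (hσp k) (hτp k) h1 h2 h3 h4
  have hu : ∀ k, u (k+1) ∈ edom F := fun k => (ediff_real hFp (hres k).1).1
  have hv : ∀ k, v (k+1) ∈ edom G := fun k => (ediff_real hGp (hres k).2).1
  have hupper : ∀ k, ∀ x' ∈ edom F, ∀ y' ∈ edom G, _ := fun k x' hx' y' hy' =>
    gap_le_residual K hFp hGp hF (hres k).1 (hres k).2 hx' hy'
  have hlower : ∀ k, γ₁ / 2 * ‖u (k+1) - xs‖ ^ 2 ≤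
      ⟪K (u (k+1)), ys⟫ - ⟪K xs, v (k+1)⟫ - (G ys).toReal - (F xs).toReal
        + (F (u (k+1))).toReal + (G (v (k+1))).toReal := fun k => by
    have h := gap_le_residual K hFp hGp hF (x := xs) (y := ys) (A := 0) (B := 0)
      (by simpa using hsaddle.2.2.1) (by simpa using hsaddle.2.2.2) (hu k) (hv k)
    rw [inner_zero_left, inner_zero_left, norm_sub_rev] at h
    linarith
  obtain ⟨hlima, hlimb, C, hC, hbd⟩ := asymptotics K (γ₁ := γ₁) hγ0 hγ hσ₀ hτ₀ hθ hσ hτ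
    (e := fun k => u (k+1) - xs) (a := a) (f := fun k => v (k+1) - ys) (b := b)
    (ξ := fun k => xh k - (xs - σ k • K.adjoint ys))
    (η := fun k => yh k - (ys + τ k • K xs))
    (fun k => by
      have h1 := hlower k
      have h2 := hupper k xs hsaddle.1 ys hsaddle.2.1
      simp only [hA, hB] at h2
      linarith)
    (fun k => by
      obtain ⟨-, -, h3, -, -, -⟩ := hstep k
      have : xh k - (xs - σ k • K.adjoint ys)
          = (xh k - ub (k+1)) + (u (k+1) - xs) - (u (k+1) - ub (k+1)) + σ k • K.adjoint ys := by
        abel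
      rw [this, h3]
      simp only [ha, hb, map_sub, map_add, map_smul]
      module)
    (fun k => by
      obtain ⟨-, -, h3, -, h5, -⟩ := hstep k
      have := (hθp k).ne'
      simp only [hb]
      rw [h5, h3, hσ]
      simp only [map_sub, map_add, map_smul]
      module)
    (fun k => by
      obtain ⟨-, -, -, h4, -, -⟩ := hstep k
      have : yh k - (ys + τ k • K xs)
          = (yh k - vb (k+1)) + (v (k+1) - ys) - (v (k+1) - vb (k+1)) - τ k • K xs := by
        abel
      rw [this, h4]
      simp only [ha, hb, map_sub, map_add, map_smul]
      module)
    (fun k => by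
      obtain ⟨-, -, -, h4, -, h6⟩ := hstep k
      simp only [ha]
      rw [h6, h4, hτ, div_eq_mul_inv]
      simp only [map_sub, map_add, map_smul]
      module)
  obtain ⟨D₁, hD₁⟩ := hX₀b.exists_norm_le
  obtain ⟨D₂, hD₂⟩ := hY₀b.exists_norm_le
  have hD₁0 : 0 ≤ D₁ := (norm_nonneg _).trans (hD₁ xs hxs)
  have hD₂0 : 0 ≤ D₂ := (norm_nonneg _).trans (hD₂ ys hys)
  set s := σ 0 * τ 0 with hsdef
  have hsp : 0 < s := mul_pos hσ₀ hτ₀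
  set M := 1 + σ 0 * γ with hM
  have hMp : 0 < M := by positivity
  set δ : ℕ → ℝ := fun k => ‖a k‖ / σ k + ‖b k‖ with hδ
  have hδlim : Tendsto δ atTop (nhds 0) := by simpa using hlima.add hlimb
  have hδ0 : ∀ k, 0 ≤ δ k := fun k => by have := hσp k; positivity
  have haδ : ∀ k, ‖a k‖ / σ k ≤ δ k := fun k => le_add_of_nonneg_right (norm_nonneg _)
  have hbδ : ∀ k, ‖b k‖ ≤ δ k := fun k => le_add_of_nonneg_left (by have := hσp k; positivity)
  have hKadj : ∀ y : Y, ‖K.adjoint y‖ ≤ ‖K‖ * ‖y‖ := fun y => by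
    have := K.adjoint.le_opNorm y
    rwa [LinearIsometryEquiv.norm_map] at this
  have hAn : ∀ k, ‖A k‖ ≤ (1 + M * ‖K‖) * δ k := fun k => by
    have hσk := hσp k
    have hμp : 0 < (θ k)⁻¹ := inv_pos.2 (hθp k)
    calc ‖A k‖ ≤ ‖a k‖ / σ k + (θ k)⁻¹ * ‖K.adjoint (b k)‖ := by
          refine (norm_add_le _ _).trans ?_
          rw [norm_smul, norm_smul, Real.norm_of_nonneg (inv_pos.2 hσk).le,
            Real.norm_of_nonneg hμp.le, div_eq_inv_mul]
      _ ≤ δ k + M * (‖K‖ * δ k) := by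
          gcongr
          · exact haδ k
          · exact hμM k
          · exact (hKadj _).trans (by gcongr; exact hbδ k)
      _ = _ := by ring
  have hBn : ∀ k, ‖B k‖ ≤ σ k * ((s⁻¹ + ‖K‖) * δ k) := fun k => by
    have hσk := hσp k
    have hτk := hτp k
    have hτinv : (τ k)⁻¹ = σ k * s⁻¹ := by rw [← hs k]; field_simp
    calc ‖B k‖ ≤ σ k * s⁻¹ * ‖b k‖ + θ k * ‖K (a k)‖ := by
          refine (norm_sub_le _ _).trans ?_
          rw [norm_smul, norm_smul, Real.norm_of_nonneg (inv_pos.2 hτk).le,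
            Real.norm_of_nonneg (hθp k).le, hτinv]
      _ ≤ σ k * s⁻¹ * δ k + 1 * (‖K‖ * (δ k * σ k)) := by
          gcongr
          · exact hbδ k
          · exact hθ1 k
          · refine (K.le_opNorm _).trans ?_
            gcongr
            have := haδ k
            rwa [div_le_iff₀ hσk] at this
      _ = _ := by ring
  have hσC : ∀ k, σ k ≤ C₀ := fun k => by
    have h1 := hkσ k
    have h2 : 0 ≤ (k : ℝ) * σ k := mul_nonneg k.cast_nonneg (hσp k).le
    linarith
  set R₁ := C * C₀ + (D₁ + D₁) with hR₁
  set R₂ := C + (D₂ + D₂) with hR₂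
  -- the residual bound, with the distance of `u (k+1)` to the comparison point still explicit
  have hbound : ∀ᶠ k in atTop, ∀ x' ∈ X₀, ∀ y' ∈ Y₀, ∀ r, ‖u (k+1) - x'‖ ≤ r →
      ⟪K (u (k+1)), y'⟫ - ⟪K x', v (k+1)⟫ - (G y').toReal - (F x').toReal
        + (F (u (k+1))).toReal + (G (v (k+1))).toReal
      ≤ (1 + M * ‖K‖) * δ k * r + σ k * ((s⁻¹ + ‖K‖) * δ k) * R₂ := by
    filter_upwards [hbd] with k hk x' hx' y' hy' r hr
    have h1 := hupper k x' (hX₀ hx') y' (hY₀ hy')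
    have h2 := real_inner_le_norm (A k) (u (k+1) - x')
    have h3 := real_inner_le_norm (B k) (v (k+1) - y')
    have h4 : ‖v (k+1) - y'‖ ≤ R₂ := by
      have : v (k+1) - y' = (v (k+1) - ys) + (ys - y') := by abel
      rw [this, hR₂]
      exact (norm_add_le _ _).trans (add_le_add hk.2
        ((norm_sub_le _ _).trans (add_le_add (hD₂ ys hys) (hD₂ y' hy'))))
    have h5 : ‖A k‖ * ‖u (k+1) - x'‖ ≤ (1 + M * ‖K‖) * δ k * r :=
      mul_le_mul (hAn k) hr (norm_nonneg _) ((norm_nonneg _).trans (hAn k))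
    have h6 : ‖B k‖ * ‖v (k+1) - y'‖ ≤ σ k * ((s⁻¹ + ‖K‖) * δ k) * R₂ :=
      mul_le_mul (hBn k) h4 (norm_nonneg _) ((norm_nonneg _).trans (hBn k))
    have h7 : 0 ≤ γ₁ / 2 * ‖u (k+1) - x'‖ ^ 2 := by positivity
    linarith
  have hreal : ∀ W : ℝ, Tendsto (fun k => ((W * δ k : ℝ) : EReal)) atTop (nhds (0 : EReal)) :=
    fun W => by
      have h1 := hδlim.const_mul W
      rw [mul_zero] at h1
      exact_mod_cast (continuous_coe_real_ereal.tendsto (0 : ℝ)).comp h1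
  constructor
  · rw [← tendsto_add_atTop_iff_nat 1]
    have hmain : ∀ᶠ k in atTop, 0 ≤ gap K F G X₀ Y₀ (u (k+1)) (v (k+1)) ∧
        gap K F G X₀ Y₀ (u (k+1)) (v (k+1))
          ≤ ((((1 + M * ‖K‖) * R₁ + C₀ * (s⁻¹ + ‖K‖) * R₂) * δ k : ℝ) : EReal) := by
      filter_upwards [hbound, hbd] with k hk hek
      refine gap_bounds K hFp hGp hxs hys (hu k) (hv k) ?_ fun x' hx' y' hy' => ?_
      · have h1 := hlower k
        have h2 : 0 ≤ γ₁ / 2 * ‖u (k+1) - xs‖ ^ 2 := by positivity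
        linarith
      · refine (hk x' hx' y' hy' R₁ ?_).trans ?_
        · have : u (k+1) - x' = (u (k+1) - xs) + (xs - x') := by abel
          rw [this, hR₁]
          refine (norm_add_le _ _).trans (add_le_add (hek.1.trans ?_)
            ((norm_sub_le _ _).trans (add_le_add (hD₁ xs hxs) (hD₁ x' hx'))))
          exact mul_le_mul_of_nonneg_left (hσC k) hC.le
        · have h1 : σ k * ((s⁻¹ + ‖K‖) * δ k * R₂) ≤ C₀ * ((s⁻¹ + ‖K‖) * δ k * R₂) := by
            have := hδ0 k
            exact mul_le_mul_of_nonneg_right (hσC k) (by positivity)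
          linarith
    exact tendsto_of_tendsto_of_tendsto_of_le_of_le' tendsto_const_nhds (hreal _)
      (hmain.mono fun _ h => h.1) (hmain.mono fun _ h => h.2)
  · rw [← tendsto_add_atTop_iff_nat 1]
    set W := (1 + M * ‖K‖) * C + (s⁻¹ + ‖K‖) * R₂ with hW
    have hWp : 0 ≤ W := by positivity
    have hmain : ∀ᶠ k : ℕ in atTop,
        0 ≤ (((k+1 : ℕ) : ℝ) : EReal) * epRestr K F G Y₀ xs (u (k+1)) ∧
        (((k+1 : ℕ) : ℝ) : EReal) * epRestr K F G Y₀ xs (u (k+1))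
          ≤ ((C₀ * W * δ k : ℝ) : EReal) := by
      filter_upwards [hbound, hbd] with k hk hek
      have hep := epRestr_bounds K hFp hGp hY₀ hsaddle hys (hu k) (r := σ k * (W * δ k))
        fun y' hy' => by
          have h1 := hk xs hxs y' hy' _ hek.1
          -- `L(xs, ys) ≥ L(xs, v)` replaces the dual iterate by the saddle point
          have h2 := (ediff_real hGp hsaddle.2.2.2).2 _ (hv k)
          rw [inner_sub_right] at h2
          have h3 : σ k * (W * δ k) = (1 + M * ‖K‖) * δ k * (C * σ k)
              + σ k * ((s⁻¹ + ‖K‖) * δ k) * R₂ := by rw [hW]; ring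
          linarith
      have hk0 : (0 : EReal) ≤ (((k+1 : ℕ) : ℝ) : EReal) := by
        exact_mod_cast (k+1).cast_nonneg (α := ℝ)
      refine ⟨mul_nonneg hk0 hep.1, (mul_le_mul_of_nonneg_left hep.2 hk0).trans ?_⟩
      have h1 := mul_le_mul_of_nonneg_right (hkσ k) (mul_nonneg hWp (hδ0 k))
      rw [← EReal.coe_mul, EReal.coe_le_coe_iff]
      push_cast
      linarith
    exact tendsto_of_tendsto_of_tendsto_of_le_of_le' tendsto_const_nhds (hreal _)
      (hmain.mono fun _ h => h.1) (hmain.mono fun _ h => h.2)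

end
end
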